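/- G(q⁶)H(q) − qG(q)H(q⁶) = χ(−q)/χ(−q³), where χ(q)=(−q;q²)_∞ and G, H are the Rogers–Ramanujan series in product form. -/

import Mathlib

/-- Rogers–Ramanujan series `G` in product form: `G(q) = 1/((q;q⁵)_∞ (q⁴;q⁵)_∞)`. -/
noncomputable def RRG (q : ℂ) : ℂ :=
  1 / ((∏' k : ℕ, (1 - q ^ (5 * k + 1))) * ∏' k : ℕ, (1 - q ^ (5 * k + 4)))

/-- Rogers–Ramanujan series `H` in product form: `H(q) = 1/((q²;q⁵)_∞ (q³;q⁵)_∞)`. -/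
noncomputable def RRH (q : ℂ) : ℂ :=
  1 / ((∏' k : ℕ, (1 - q ^ (5 * k + 2))) * ∏' k : ℕ, (1 - q ^ (5 * k + 3)))

/-- `χ(q) = (−q;q²)_∞ = ∏_{n≥0}(1 + q^(2n+1))`. -/
noncomputable def rchi (q : ℂ) : ℂ := ∏' n : ℕ, (1 + q ^ (2 * n + 1))

/-!
By the Jacobi triple product, `(q;q)_∞ G(q)` and `(q;q)_∞ H(q)` are theta series to the base `q⁵`,
while `2 (q;q)_∞ (q⁶;q⁶)_∞ χ(-q) / χ(-q³)` is the product of the theta series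
`∑ₘ (-1)ᵐ q^(m²) = (q;q)_∞ (q;q²)_∞` and `∑ₙ q^(3n(n-1)/2) = 2 (q⁶;q⁶)_∞ / (q³;q⁶)_∞`.
Split this product according to `m - n` modulo `5`. The reflection `(m, n) ↦ (-m, 1 - n)` matches
the residues `0, 4` and the residues `1, 3`. A linear change of variables turns the residue `0` into
the theta product behind `G(q⁶) H(q)` and the residue `1` into the one behind `-q G(q) H(q⁶)`. The
residue `2` contributes nothing, because another reflection changes the sign of its terms.
-/

open Filter Finset Topology

section qPochhammer

variable {R : Type*} [CommRing R]

/-- The finite `q`-Pochhammer symbol `(z;q)_N = ∏_{k<N} (1 - z qᵏ)`. -/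
def qPochhammer (z q : R) (N : ℕ) : R := ∏ k ∈ range N, (1 - z * q ^ k)

/-- The infinite `q`-Pochhammer symbol `(z;q)_∞ = ∏_{k≥0} (1 - z qᵏ)`. -/
noncomputable def qPochhammerInf [TopologicalSpace R] (z q : R) : R := ∏' k : ℕ, (1 - z * q ^ k)

lemma qPochhammer_zero (z q : R) : qPochhammer z q 0 = 1 := prod_range_zero _

lemma qPochhammer_succ (z q : R) (N : ℕ) :
    qPochhammer z q (N + 1) = qPochhammer z q N * (1 - z * q ^ N) :=
  prod_range_succ _ _

lemma qPochhammer_mul_eq_prod (z q : R) (m N : ℕ) :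
    qPochhammer z q (m * N) = ∏ j ∈ range m, qPochhammer (z * q ^ j) (q ^ m) N := by
  induction N with
  | zero => simp [qPochhammer_zero]
  | succ N ih =>
    simp only [qPochhammer_succ, prod_mul_distrib, ← ih]
    rw [Nat.mul_succ, qPochhammer, prod_range_add, ← qPochhammer]
    congr! 2 with j
    ring

lemma tprod_one_sub_pow_eq_qPochhammerInf [TopologicalSpace R] (q : R) (a b : ℕ) :
    ∏' k : ℕ, (1 - q ^ (a * k + b)) = qPochhammerInf (q ^ b) (q ^ a) :=
  tprod_congr fun k => by ring

end qPochhammer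

section qPochhammerInf

variable {𝕜 : Type*} [NormedField 𝕜] {q : 𝕜}

lemma norm_pow_lt_one_of_ne_zero (hq : ‖q‖ < 1) {a : ℕ} (ha : a ≠ 0) : ‖q ^ a‖ < 1 := by
  rw [norm_pow]
  exact pow_lt_one₀ (norm_nonneg _) hq ha

lemma one_sub_mul_pow_ne_zero {z : 𝕜} (hz : ‖z‖ < 1) (hq : ‖q‖ < 1) (k : ℕ) :
    1 - z * q ^ k ≠ 0 := by
  intro h
  have hlt : ‖z * q ^ k‖ < 1 := by
    rw [norm_mul, norm_pow]
    exact mul_lt_one_of_nonneg_of_lt_one_left (norm_nonneg z) hz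
      (pow_le_one₀ (norm_nonneg q) hq.le)
  simp [← sub_eq_zero.mp h] at hlt

lemma summable_norm_neg_mul_pow (z : 𝕜) (hq : ‖q‖ < 1) :
    Summable fun k : ℕ => ‖-(z * q ^ k)‖ := by
  simp only [norm_neg, norm_mul, norm_pow]
  exact (summable_geometric_of_lt_one (norm_nonneg _) hq).mul_left _

variable [CompleteSpace 𝕜]

lemma multipliable_one_sub_mul_pow (z : 𝕜) (hq : ‖q‖ < 1) :
    Multipliable fun k : ℕ => 1 - z * q ^ k := by
  simpa only [sub_eq_add_neg] using
    multipliable_one_add_of_summable (summable_norm_neg_mul_pow z hq)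

lemma tendsto_qPochhammer (z : 𝕜) (hq : ‖q‖ < 1) :
    Tendsto (qPochhammer z q) atTop (𝓝 (qPochhammerInf z q)) :=
  (multipliable_one_sub_mul_pow z hq).tendsto_prod_tprod_nat

lemma qPochhammerInf_ne_zero {z : 𝕜} (hz : ‖z‖ < 1) (hq : ‖q‖ < 1) :
    qPochhammerInf z q ≠ 0 := by
  simpa only [qPochhammerInf, sub_eq_add_neg] using
    tprod_one_add_ne_zero_of_summable (f := fun k : ℕ => -(z * q ^ k))
      (fun k => by simpa only [sub_eq_add_neg] using one_sub_mul_pow_ne_zero hz hq k)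
      (summable_norm_neg_mul_pow z hq)

lemma qPochhammerInf_pow_ne_zero (hq : ‖q‖ < 1) {a b : ℕ} (ha : a ≠ 0) (hb : b ≠ 0) :
    qPochhammerInf (q ^ a) (q ^ b) ≠ 0 :=
  qPochhammerInf_ne_zero (norm_pow_lt_one_of_ne_zero hq ha) (norm_pow_lt_one_of_ne_zero hq hb)

lemma qPochhammerInf_eq_prod (z : 𝕜) (hq : ‖q‖ < 1) {m : ℕ} (hm : m ≠ 0) :
    qPochhammerInf z q = ∏ j ∈ range m, qPochhammerInf (z * q ^ j) (q ^ m) := by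
  have hleft : Tendsto (fun N => qPochhammer z q (m * N)) atTop (𝓝 (qPochhammerInf z q)) :=
    (tendsto_qPochhammer z hq).comp (tendsto_id.const_mul_atTop' hm.bot_lt)
  have hright : Tendsto (fun N => ∏ j ∈ range m, qPochhammer (z * q ^ j) (q ^ m) N) atTop
      (𝓝 (∏ j ∈ range m, qPochhammerInf (z * q ^ j) (q ^ m))) :=
    tendsto_finsetProd _ fun j _ => tendsto_qPochhammer _ (norm_pow_lt_one_of_ne_zero hq hm)
  simp only [qPochhammer_mul_eq_prod] at hleft
  exact tendsto_nhds_unique hleft hright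

lemma qPochhammerInf_self_eq_mul_two (hq : ‖q‖ < 1) :
    qPochhammerInf q q = qPochhammerInf q (q ^ 2) * qPochhammerInf (q ^ 2) (q ^ 2) := by
  rw [qPochhammerInf_eq_prod q hq two_ne_zero]
  simp only [prod_range_succ, prod_range_zero, ← pow_succ', one_mul, zero_add, pow_one]

lemma qPochhammerInf_self_eq_mul_five (hq : ‖q‖ < 1) :
    qPochhammerInf q q = qPochhammerInf q (q ^ 5) * qPochhammerInf (q ^ 2) (q ^ 5) *
      qPochhammerInf (q ^ 3) (q ^ 5) * qPochhammerInf (q ^ 4) (q ^ 5) *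
      qPochhammerInf (q ^ 5) (q ^ 5) := by
  rw [qPochhammerInf_eq_prod q hq (by decide : 5 ≠ 0)]
  simp only [prod_range_succ, prod_range_zero, ← pow_succ', one_mul, zero_add, pow_one]

lemma qPochhammerInf_neg_mul_qPochhammerInf (z : 𝕜) (hq : ‖q‖ < 1) :
    qPochhammerInf (-z) q * qPochhammerInf z q = qPochhammerInf (z ^ 2) (q ^ 2) := by
  unfold qPochhammerInf
  rw [← (multipliable_one_sub_mul_pow (-z) hq).tprod_mul (multipliable_one_sub_mul_pow z hq)]
  exact tprod_congr fun k => by ring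

lemma qPochhammerInf_neg_self_eq_inv (hq : ‖q‖ < 1) :
    qPochhammerInf (-q) q = (qPochhammerInf q (q ^ 2))⁻¹ := by
  have hsq := qPochhammerInf_neg_mul_qPochhammerInf q hq
  rw [qPochhammerInf_self_eq_mul_two hq, ← mul_assoc] at hsq
  exact eq_inv_of_mul_eq_one_left
    (mul_eq_right₀ (qPochhammerInf_pow_ne_zero hq two_ne_zero two_ne_zero) |>.mp hsq)

lemma qPochhammerInf_eq_one_sub_mul (z : 𝕜) (hq : ‖q‖ < 1) :
    qPochhammerInf z q = (1 - z) * qPochhammerInf (z * q) q := by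
  have hshift (k : ℕ) : 1 - z * q ^ (k + 1) = 1 - z * q * q ^ k := by ring
  unfold qPochhammerInf
  rw [tprod_eq_zero_mul']
  · simp only [hshift, pow_zero, mul_one]
  · simpa only [hshift] using multipliable_one_sub_mul_pow (z * q) hq

end qPochhammerInf

section Theta

/-- The triangular exponent `n(n-1)/2` of the Jacobi triple product; the division is exact. -/
def thetaExponent (n : ℤ) : ℤ := n * (n - 1) / 2

lemma two_mul_thetaExponent (n : ℤ) : 2 * thetaExponent n = n * (n - 1) :=
  Int.mul_ediv_cancel' (Int.even_mul_pred_self n).two_dvd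

lemma thetaExponent_succ (n : ℤ) : thetaExponent (n + 1) = thetaExponent n + n := by
  linarith [two_mul_thetaExponent n, two_mul_thetaExponent (n + 1)]

variable {K : Type*} [Field K] {z q : K}

/-- The term `(-1)ⁿ zⁿ q^(n(n-1)/2)` of the Jacobi triple product. -/
def thetaTerm (z q : K) (n : ℤ) : K := (-1) ^ n * z ^ n * q ^ thetaExponent n

/-- The theta series `∑ₙ (-1)ⁿ zⁿ q^(n(n-1)/2)` over all integers `n`. -/
noncomputable def thetaSeries [TopologicalSpace K] (z q : K) : K := ∑' n : ℤ, thetaTerm z q n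

lemma thetaTerm_zero (z q : K) : thetaTerm z q 0 = 1 := by simp [thetaTerm, thetaExponent]

lemma thetaTerm_succ (hz : z ≠ 0) (hq : q ≠ 0) (n : ℤ) :
    thetaTerm z q (n + 1) = -(z * q ^ n) * thetaTerm z q n := by
  simp only [thetaTerm, thetaExponent_succ, zpow_add₀ hq, zpow_add₀ hz,
    zpow_add₀ (neg_ne_zero.mpr one_ne_zero : (-1 : K) ≠ 0), zpow_one]
  ring

lemma thetaTerm_pred (hz : z ≠ 0) (hq : q ≠ 0) (n : ℤ) :
    thetaTerm z q (n - 1) = -(q / (z * q ^ n)) * thetaTerm z q n := by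
  have hsucc := thetaTerm_succ hz hq (n - 1)
  rw [sub_add_cancel, zpow_sub₀ hq, zpow_one] at hsucc
  have := zpow_ne_zero n hq
  rw [hsucc]
  field_simp

lemma thetaTerm_ne_zero (hz : z ≠ 0) (hq : q ≠ 0) (n : ℤ) : thetaTerm z q n ≠ 0 :=
  mul_ne_zero (mul_ne_zero (zpow_ne_zero _ (neg_ne_zero.mpr one_ne_zero)) (zpow_ne_zero _ hz))
    (zpow_ne_zero _ hq)

end Theta

section FiniteTripleProduct

variable {K : Type*} [Field K] {z q : K}

/-- `1 / (q;q)_k`, extended by zero to negative `k`, so that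
`(1 - qᵏ) / (q;q)_k = 1 / (q;q)_{k-1}` holds for every integer `k`. -/
def qPochhammerRecip (q : K) (k : ℤ) : K := if 0 ≤ k then (qPochhammer q q k.toNat)⁻¹ else 0

lemma qPochhammerRecip_of_neg (q : K) {k : ℤ} (hk : k < 0) : qPochhammerRecip q k = 0 :=
  if_neg hk.not_ge

lemma qPochhammerRecip_natCast (q : K) (k : ℕ) :
    qPochhammerRecip q k = (qPochhammer q q k)⁻¹ := by
  simp [qPochhammerRecip]

lemma qPochhammerRecip_pred (hq : ∀ k : ℕ, k ≠ 0 → q ^ k ≠ 1) (k : ℤ) :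
    qPochhammerRecip q (k - 1) = (1 - q ^ k) * qPochhammerRecip q k := by
  rcases lt_trichotomy k 0 with hk | rfl | hk
  · rw [qPochhammerRecip_of_neg q hk, qPochhammerRecip_of_neg q (by lia), mul_zero]
  · rw [qPochhammerRecip_of_neg q (by lia), zpow_zero, sub_self, zero_mul]
  · obtain ⟨j, rfl⟩ : ∃ j : ℕ, k = (j + 1 : ℕ) := ⟨(k - 1).toNat, by lia⟩
    have hfactor : 1 - q ^ (j + 1) ≠ 0 := sub_ne_zero.mpr (hq _ j.succ_ne_zero).symm
    rw [zpow_natCast, qPochhammerRecip_natCast, qPochhammer_succ, ← pow_succ', mul_inv,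
      mul_left_comm, mul_inv_cancel₀ hfactor, mul_one, ← qPochhammerRecip_natCast]
    simp

/-- The `n`-th term of the finite form of the Jacobi triple product: the theta term weighted by
`1 / ((q;q)_{N+n} (q;q)_{N-n})`, which vanishes unless `-N ≤ n ≤ N`. -/
def finiteThetaTerm (z q : K) (N : ℕ) (n : ℤ) : K :=
  thetaTerm z q n * (qPochhammerRecip q (N + n) * qPochhammerRecip q (N - n))

lemma finiteThetaTerm_eq_zero (z q : K) {N : ℕ} {n : ℤ} (hn : n ∉ Set.Icc (-(N : ℤ)) N) :
    finiteThetaTerm z q N n = 0 := by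
  rw [Set.mem_Icc, not_and_or, not_le, not_le] at hn
  rcases hn with hn | hn
  · rw [finiteThetaTerm, qPochhammerRecip_of_neg q (by lia), zero_mul, mul_zero]
  · rw [finiteThetaTerm, qPochhammerRecip_of_neg q (k := N - n) (by lia), mul_zero, mul_zero]

lemma hasFiniteSupport_finiteThetaTerm (z q : K) (N : ℕ) :
    (finiteThetaTerm z q N).HasFiniteSupport :=
  (Set.finite_Icc (-(N : ℤ)) N).subset fun _ hn => by
    contrapose! hn
    simpa using finiteThetaTerm_eq_zero z q hn

lemma finiteThetaTerm_succ (hz : z ≠ 0) (hq0 : q ≠ 0) (hq : ∀ k : ℕ, k ≠ 0 → q ^ k ≠ 1)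
    (N : ℕ) (n : ℤ) :
    (1 - q ^ (2 * N + 1)) * (1 - q ^ (2 * N + 2)) * finiteThetaTerm z q (N + 1) n =
      (1 + q ^ (2 * N + 1)) * finiteThetaTerm z q N n -
      z * q ^ N * finiteThetaTerm z q N (n - 1) -
      q ^ (N + 1) / z * finiteThetaTerm z q N (n + 1) := by
  have hup := qPochhammerRecip_pred hq (N + 1 + n)
  have hup' := qPochhammerRecip_pred hq (N + n)
  have hdown := qPochhammerRecip_pred hq (N + 1 - n)
  have hdown' := qPochhammerRecip_pred hq (N - n)
  rw [add_right_comm, add_sub_cancel_right] at hup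
  rw [add_sub_right_comm, add_sub_cancel_right] at hdown
  simp only [finiteThetaTerm, thetaTerm_pred hz hq0, thetaTerm_succ hz hq0, Nat.cast_add,
    Nat.cast_one]
  rw [show (N : ℤ) + (n - 1) = N + n - 1 by ring, show (N : ℤ) - (n - 1) = N - n + 1 by ring,
    show (N : ℤ) + (n + 1) = N + n + 1 by ring, show (N : ℤ) - (n + 1) = N - n - 1 by ring,
    add_right_comm _ 1 n, add_sub_right_comm _ 1 n, hup', hdown', hup, hdown]
  have := zpow_ne_zero n hq0
  simp only [zpow_add₀ hq0, zpow_sub₀ hq0, zpow_one, zpow_natCast]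
  field_simp
  ring

/-- The sum side of the finite form of the Jacobi triple product. -/
noncomputable def finiteTheta (z q : K) (N : ℕ) : K := ∑ᶠ n : ℤ, finiteThetaTerm z q N n

lemma finiteTheta_zero (z q : K) : finiteTheta z q 0 = 1 := by
  have hzero (n : ℤ) (hn : n ≠ 0) : finiteThetaTerm z q 0 n = 0 :=
    finiteThetaTerm_eq_zero z q (by simpa using hn)
  rw [finiteTheta, finsum_eq_single _ 0 hzero]
  simp [finiteThetaTerm, thetaTerm_zero, qPochhammerRecip, qPochhammer_zero]

lemma finiteTheta_succ (hz : z ≠ 0) (hq0 : q ≠ 0) (hq : ∀ k : ℕ, k ≠ 0 → q ^ k ≠ 1) (N : ℕ) :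
    (1 - q ^ (2 * N + 1)) * (1 - q ^ (2 * N + 2)) * finiteTheta z q (N + 1) =
      (1 - z * q ^ N) * (1 - q / z * q ^ N) * finiteTheta z q N := by
  have hfin := hasFiniteSupport_finiteThetaTerm z q N
  have hpred : ∑ᶠ n : ℤ, finiteThetaTerm z q N (n - 1) = finiteTheta z q N :=
    finsum_comp_equiv (Equiv.subRight (1 : ℤ))
  have hsucc : ∑ᶠ n : ℤ, finiteThetaTerm z q N (n + 1) = finiteTheta z q N :=
    finsum_comp_equiv (Equiv.addRight (1 : ℤ))
  have hfin_pred : (fun n : ℤ => finiteThetaTerm z q N (n - 1)).HasFiniteSupport :=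
    hfin.fun_comp_of_injective sub_left_injective
  have hfin_succ : (fun n : ℤ => finiteThetaTerm z q N (n + 1)).HasFiniteSupport :=
    hfin.fun_comp_of_injective (add_left_injective 1)
  rw [finiteTheta, mul_finsum]
  simp only [finiteThetaTerm_succ hz hq0 hq]
  rw [finsum_sub_distrib, finsum_sub_distrib, ← mul_finsum, ← mul_finsum, ← mul_finsum,
    hpred, hsucc, ← finiteTheta]
  · field_simp
    ring
  all_goals fun_prop

theorem qPochhammer_mul_qPochhammer_div (hz : z ≠ 0) (hq0 : q ≠ 0)
    (hq : ∀ k : ℕ, k ≠ 0 → q ^ k ≠ 1) (N : ℕ) :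
    qPochhammer z q N * qPochhammer (q / z) q N = qPochhammer q q (2 * N) * finiteTheta z q N := by
  induction N with
  | zero => simp [qPochhammer_zero, finiteTheta_zero]
  | succ N ih =>
    calc
      _ = qPochhammer z q N * qPochhammer (q / z) q N *
          ((1 - z * q ^ N) * (1 - q / z * q ^ N)) := by
        rw [qPochhammer_succ, qPochhammer_succ]
        ring
      _ = qPochhammer q q (2 * N) *
          ((1 - z * q ^ N) * (1 - q / z * q ^ N) * finiteTheta z q N) := by
        rw [ih]
        ring
      _ = _ := by
        rw [← finiteTheta_succ hz hq0 hq, Nat.mul_succ, qPochhammer_succ, qPochhammer_succ]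
        ring

end FiniteTripleProduct

section TripleProduct

variable {𝕜 : Type*} [NormedField 𝕜] {z q : 𝕜}

lemma pow_ne_one_of_norm_lt_one (hq : ‖q‖ < 1) (k : ℕ) (hk : k ≠ 0) : q ^ k ≠ 1 := by
  intro h
  simpa [h] using norm_pow_lt_one_of_ne_zero hq hk

lemma summable_norm_thetaTerm (hz : z ≠ 0) (hq0 : q ≠ 0) (hq : ‖q‖ < 1) :
    Summable fun n => ‖thetaTerm z q n‖ := by
  have hlim (c : ℝ) : Tendsto (fun n : ℕ => c * ‖q‖ ^ n) atTop (𝓝 0) := by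
    simpa using (tendsto_pow_atTop_nhds_zero_of_lt_one (norm_nonneg q) hq).const_mul c
  have hne (n : ℤ) : ‖thetaTerm z q n‖ ≠ 0 := norm_ne_zero_iff.mpr (thetaTerm_ne_zero hz hq0 n)
  have hratio_nat (n : ℕ) :
      ‖‖thetaTerm z q (n + 1 : ℕ)‖‖ / ‖‖thetaTerm z q n‖‖ = ‖z‖ * ‖q‖ ^ n := by
    simp only [Nat.cast_add, Nat.cast_one, thetaTerm_succ hz hq0, norm_mul, norm_norm, norm_neg,
      zpow_natCast, norm_pow, mul_div_cancel_right₀ _ (hne n)]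
  have hratio_neg (n : ℕ) :
      ‖‖thetaTerm z q (-(n + 1 : ℕ))‖‖ / ‖‖thetaTerm z q (-n)‖‖ = ‖q‖ / ‖z‖ * ‖q‖ ^ n := by
    simp only [Nat.cast_add, Nat.cast_one, neg_add, ← sub_eq_add_neg, thetaTerm_pred hz hq0,
      norm_mul, norm_norm, norm_neg, norm_div, zpow_neg, zpow_natCast, norm_inv, norm_pow,
      mul_div_cancel_right₀ _ (hne (-n))]
    field_simp
  refine Summable.of_nat_of_neg ?_ ?_
  · exact summable_of_ratio_test_tendsto_lt_one one_pos (.of_forall fun n => hne n)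
      ((hlim ‖z‖).congr fun n => (hratio_nat n).symm)
  · exact summable_of_ratio_test_tendsto_lt_one one_pos (.of_forall fun n => hne (-n))
      ((hlim (‖q‖ / ‖z‖)).congr fun n => (hratio_neg n).symm)

variable [CompleteSpace 𝕜]

lemma tendsto_qPochhammerRecip (hq : ‖q‖ < 1) :
    Tendsto (qPochhammerRecip q) atTop (𝓝 (qPochhammerInf q q)⁻¹) := by
  have htoNat : Tendsto Int.toNat atTop atTop :=
    tendsto_atTop_atTop.mpr fun b => ⟨b, fun a ha => by lia⟩
  have hinv : Tendsto (fun k : ℤ => (qPochhammer q q k.toNat)⁻¹) atTop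
      (𝓝 (qPochhammerInf q q)⁻¹) :=
    ((tendsto_qPochhammer q hq).comp htoNat).inv₀ (qPochhammerInf_ne_zero hq hq)
  refine hinv.congr' ?_
  filter_upwards [eventually_ge_atTop 0] with k hk
  exact (if_pos hk).symm

lemma exists_norm_qPochhammerRecip_le (hq : ‖q‖ < 1) : ∃ C, ∀ k, ‖qPochhammerRecip q k‖ ≤ C := by
  obtain ⟨C, hC⟩ := ((tendsto_qPochhammer q hq).inv₀
    (qPochhammerInf_ne_zero hq hq)).norm.bddAbove_range
  refine ⟨C, fun k => ?_⟩
  rcases lt_or_ge k 0 with hk | hk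
  · rw [qPochhammerRecip_of_neg q hk, norm_zero]
    exact (norm_nonneg _).trans (hC ⟨0, rfl⟩)
  · rw [qPochhammerRecip, if_pos hk]
    exact hC ⟨k.toNat, rfl⟩

lemma tendsto_finiteTheta (hz : z ≠ 0) (hq0 : q ≠ 0) (hq : ‖q‖ < 1) :
    Tendsto (finiteTheta z q) atTop (𝓝 (thetaSeries z q / qPochhammerInf q q ^ 2)) := by
  obtain ⟨C, hC⟩ := exists_norm_qPochhammerRecip_le hq
  have hC0 : 0 ≤ C := (norm_nonneg _).trans (hC 0)
  have hplus (n : ℤ) : Tendsto (fun N : ℕ => qPochhammerRecip q (N + n)) atTop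
      (𝓝 (qPochhammerInf q q)⁻¹) :=
    (tendsto_qPochhammerRecip hq).comp
      (tendsto_atTop_add_const_right _ n tendsto_natCast_atTop_atTop)
  have hminus (n : ℤ) : Tendsto (fun N : ℕ => qPochhammerRecip q (N - n)) atTop
      (𝓝 (qPochhammerInf q q)⁻¹) := by
    simpa only [sub_eq_add_neg] using hplus (-n)
  have hbound (N : ℕ) (n : ℤ) : ‖finiteThetaTerm z q N n‖ ≤ ‖thetaTerm z q n‖ * (C * C) := by
    rw [finiteThetaTerm, norm_mul, norm_mul]
    gcongr
    exacts [hC _, hC _]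
  have htsum := tendsto_tsum_of_dominated_convergence
    ((summable_norm_thetaTerm hz hq0 hq).mul_right (C * C))
    (fun n => ((hplus n).mul (hminus n)).const_mul (thetaTerm z q n))
    (.of_forall hbound)
  rw [tsum_mul_right, ← mul_inv, ← sq, ← div_eq_mul_inv] at htsum
  refine htsum.congr fun N => ?_
  exact tsum_eq_finsum (hasFiniteSupport_finiteThetaTerm z q N)

theorem jacobi_triple_product (hz : z ≠ 0) (hq0 : q ≠ 0) (hq : ‖q‖ < 1) :
    thetaSeries z q = qPochhammerInf z q * qPochhammerInf (q / z) q * qPochhammerInf q q := by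
  have hproduct := (tendsto_qPochhammer z hq).mul (tendsto_qPochhammer (q / z) hq)
  have hdouble : Tendsto (fun N => qPochhammer q q (2 * N)) atTop (𝓝 (qPochhammerInf q q)) :=
    (tendsto_qPochhammer q hq).comp (tendsto_id.const_mul_atTop' two_pos)
  have hsum := hdouble.mul (tendsto_finiteTheta hz hq0 hq)
  simp only [← qPochhammer_mul_qPochhammer_div hz hq0 (pow_ne_one_of_norm_lt_one hq)] at hsum
  have := qPochhammerInf_ne_zero hq hq
  rw [tendsto_nhds_unique hproduct hsum]
  field_simp

lemma thetaSeries_pow_add (hq0 : q ≠ 0) (hq : ‖q‖ < 1) {a b : ℕ} (hab : a + b ≠ 0) :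
    thetaSeries (q ^ a) (q ^ (a + b)) = qPochhammerInf (q ^ a) (q ^ (a + b)) *
      qPochhammerInf (q ^ b) (q ^ (a + b)) * qPochhammerInf (q ^ (a + b)) (q ^ (a + b)) := by
  rw [jacobi_triple_product (pow_ne_zero _ hq0) (pow_ne_zero _ hq0)
    (norm_pow_lt_one_of_ne_zero hq hab), pow_add q a b,
    mul_div_cancel_left₀ _ (pow_ne_zero a hq0)]

lemma thetaSeries_self_sq (hq0 : q ≠ 0) (hq : ‖q‖ < 1) :
    thetaSeries q (q ^ 2) = qPochhammerInf q q * qPochhammerInf q (q ^ 2) := by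
  have htriple := thetaSeries_pow_add hq0 hq (a := 1) (b := 1) two_ne_zero
  rw [pow_one] at htriple
  rw [htriple, qPochhammerInf_self_eq_mul_two hq]
  ring

lemma thetaSeries_neg_one (hq0 : q ≠ 0) (hq : ‖q‖ < 1) :
    thetaSeries (-1) q = 2 * qPochhammerInf (q ^ 2) (q ^ 2) / qPochhammerInf q (q ^ 2) := by
  have hodd : qPochhammerInf q (q ^ 2) ≠ 0 :=
    qPochhammerInf_ne_zero hq (norm_pow_lt_one_of_ne_zero hq two_ne_zero)
  rw [jacobi_triple_product (neg_ne_zero.mpr one_ne_zero) hq0 hq,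
    qPochhammerInf_eq_one_sub_mul (-1) hq, neg_one_mul, div_neg, div_one,
    qPochhammerInf_neg_self_eq_inv hq, qPochhammerInf_self_eq_mul_two hq]
  field_simp
  ring

end TripleProduct

section Dissection

lemma tsum_int_prod_eq_sum_residues {E β : Type*} [AddCommGroup E] [UniformSpace E]
    [IsUniformAddGroup E] [CompleteSpace E] [T2Space E] (N : ℕ) [NeZero N] {f : ℤ × β → E}
    (hf : Summable f) :
    ∑' p, f p = ∑ d ∈ range N, ∑' p : ℤ × β, f (p.1 * N + d, p.2) := by
  let e : Fin N × ℤ × β ≃ ℤ × β := (Equiv.prodAssoc _ _ _).symm.trans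
    (((Equiv.prodComm _ _).trans (Int.divModEquiv N).symm).prodCongr (Equiv.refl β))
  rw [← e.tsum_eq, Summable.tsum_prod (f := fun p => f (e p)) (e.summable_iff.mpr hf),
    tsum_fintype, Finset.sum_range]
  rfl

variable {K : Type*} [Field K] {q : K}

lemma neg_one_zpow_mul_zpow_congr {a b e f : ℤ} (hsign : Even (a - b)) (hexp : 2 * e = 2 * f) :
    (-1) ^ a * q ^ e = (-1) ^ b * q ^ f := by
  have hpow : (-1 : K) ^ a = (-1) ^ b := by
    rw [← sub_add_cancel a b, zpow_add₀ (neg_ne_zero.mpr one_ne_zero), hsign.neg_one_zpow, one_mul]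
  rw [hpow, mul_left_cancel₀ two_ne_zero hexp]

/-- The term `(-1)ᵐ q^(m² + 3n(n-1)/2)` of the product of the theta series
`∑ₘ (-1)ᵐ q^(m²)` and `∑ₙ q^(3n(n-1)/2)`. -/
def dissectedTerm (q : K) (m n : ℤ) : K := (-1) ^ m * q ^ (m ^ 2 + 3 * thetaExponent n)

lemma thetaTerm_mul_thetaTerm_eq_dissectedTerm (hq : q ≠ 0) (m n : ℤ) :
    thetaTerm q (q ^ 2) m * thetaTerm (-1) (q ^ 3) n = dissectedTerm q m n := by
  have hexp : m ^ 2 = m + 2 * thetaExponent m := by linarith [two_mul_thetaExponent m]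
  have hsign : (-1 : K) ^ n * (-1) ^ n = 1 := by rw [← mul_zpow, neg_one_mul, neg_neg, one_zpow]
  simp only [dissectedTerm, hexp, thetaTerm, zpow_add₀ hq, zpow_mul, zpow_ofNat]
  linear_combination (-1) ^ m * q ^ m * (q ^ 2) ^ thetaExponent m * (q ^ 3) ^ thetaExponent n *
    hsign

/-- The sum of the `dissectedTerm q m n` with `m - n ≡ d` modulo `5`, parametrized by
`v = (m - n - d) / 5` and `n`. -/
noncomputable def residueSum [TopologicalSpace K] (q : K) (d : ℤ) : K :=
  ∑' p : ℤ × ℤ, dissectedTerm q (p.2 + (p.1 * 5 + d)) p.2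

lemma residueSum_reflect [TopologicalSpace K] (q : K) (d : ℤ) :
    residueSum q (4 - d) = residueSum q d := by
  let reflect : ℤ × ℤ ≃ ℤ × ℤ := (Equiv.subLeft (-1)).prodCongr (Equiv.subLeft 1)
  rw [residueSum, ← reflect.tsum_eq]
  refine tsum_congr fun ⟨v, n⟩ => neg_one_zpow_mul_zpow_congr ⟨-(n + (v * 5 + d)), ?_⟩ ?_
  · change 1 - n + ((-1 - v) * 5 + (4 - d)) - (n + (v * 5 + d)) = _
    ring
  · change 2 * ((1 - n + ((-1 - v) * 5 + (4 - d))) ^ 2 + 3 * thetaExponent (1 - n)) = _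
    linear_combination 3 * two_mul_thetaExponent (1 - n) - 3 * two_mul_thetaExponent n

variable {𝕜 : Type*} [NormedField 𝕜] {q : 𝕜}

lemma residueSum_two (htwo : (2 : 𝕜) ≠ 0) (q : 𝕜) : residueSum q 2 = 0 := by
  let reflect : ℤ × ℤ ≃ ℤ × ℤ := (Equiv.refl ℤ).prodShear fun v => Equiv.subLeft (-4 * v - 1)
  have hneg (p : ℤ × ℤ) : dissectedTerm q ((reflect p).2 + ((reflect p).1 * 5 + 2)) (reflect p).2 =
      -dissectedTerm q (p.2 + (p.1 * 5 + 2)) p.2 := by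
    obtain ⟨v, n⟩ := p
    have hflip (m e : ℤ) : -((-1 : 𝕜) ^ m * q ^ e) = (-1) ^ (1 + m) * q ^ e := by
      rw [zpow_one_add₀ (neg_ne_zero.mpr one_ne_zero)]
      ring
    rw [dissectedTerm, dissectedTerm, hflip]
    refine neg_one_zpow_mul_zpow_congr ⟨-n - 2 * v - 1, ?_⟩ ?_
    · change -4 * v - 1 - n + (v * 5 + 2) - (1 + (n + (v * 5 + 2))) = _
      ring
    · change 2 * ((-4 * v - 1 - n + (v * 5 + 2)) ^ 2 + 3 * thetaExponent (-4 * v - 1 - n)) = _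
      linear_combination 3 * two_mul_thetaExponent (-4 * v - 1 - n) - 3 * two_mul_thetaExponent n
  have hself : residueSum q 2 = -residueSum q 2 := by
    conv_lhs => rw [residueSum, ← reflect.tsum_eq]
    rw [tsum_congr hneg, tsum_neg, ← residueSum]
  have hdouble : 2 * residueSum q 2 = 0 := by linear_combination hself
  exact (mul_eq_zero.mp hdouble).resolve_left htwo

lemma summable_norm_thetaTerm_pow (hq0 : q ≠ 0) (hq : ‖q‖ < 1) (a : ℕ) {b : ℕ} (hb : b ≠ 0) :
    Summable fun n => ‖thetaTerm (q ^ a) (q ^ b) n‖ :=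
  summable_norm_thetaTerm (pow_ne_zero a hq0) (pow_ne_zero b hq0)
    (norm_pow_lt_one_of_ne_zero hq hb)

variable [CompleteSpace 𝕜]

lemma thetaSeries_pow_mul_thetaSeries_pow (hq0 : q ≠ 0) (hq : ‖q‖ < 1) (a c : ℕ) {b d : ℕ}
    (hb : b ≠ 0) (hd : d ≠ 0) :
    thetaSeries (q ^ a) (q ^ b) * thetaSeries (q ^ c) (q ^ d) =
      ∑' p : ℤ × ℤ, (-1) ^ (p.1 + p.2) *
        q ^ (a * p.1 + b * thetaExponent p.1 + (c * p.2 + d * thetaExponent p.2)) := by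
  rw [thetaSeries, thetaSeries, tsum_mul_tsum_of_summable_norm
    (summable_norm_thetaTerm_pow hq0 hq a hb) (summable_norm_thetaTerm_pow hq0 hq c hd)]
  refine tsum_congr fun p => ?_
  simp only [thetaTerm, zpow_add₀ hq0, zpow_add₀ (neg_ne_zero.mpr one_ne_zero : (-1 : 𝕜) ≠ 0),
    zpow_mul, zpow_natCast]
  ring

lemma residueSum_zero (hq0 : q ≠ 0) (hq : ‖q‖ < 1) :
    residueSum q 0 = thetaSeries (q ^ 12) (q ^ 30) * thetaSeries q (q ^ 5) := by
  let shear : ℤ × ℤ ≃ ℤ × ℤ := (Equiv.neg ℤ).prodShear fun l => Equiv.addRight (2 * l)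
  have hprod := thetaSeries_pow_mul_thetaSeries_pow hq0 hq 12 1 (b := 30) (d := 5)
    (by decide) (by decide)
  rw [pow_one] at hprod
  rw [hprod, residueSum, ← shear.tsum_eq]
  refine tsum_congr fun ⟨l, k⟩ => neg_one_zpow_mul_zpow_congr ⟨-2 * l, ?_⟩ ?_
  · change k + 2 * l + (-l * 5 + 0) - (l + k) = _
    ring
  · change 2 * ((k + 2 * l + (-l * 5 + 0)) ^ 2 + 3 * thetaExponent (k + 2 * l)) = _
    push_cast
    linear_combination 3 * two_mul_thetaExponent (k + 2 * l) - 30 * two_mul_thetaExponent l -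
      5 * two_mul_thetaExponent k

lemma residueSum_one (hq0 : q ≠ 0) (hq : ‖q‖ < 1) :
    residueSum q 1 = -q * (thetaSeries (q ^ 6) (q ^ 30) * thetaSeries (q ^ 2) (q ^ 5)) := by
  let shear : ℤ × ℤ ≃ ℤ × ℤ := (Equiv.neg ℤ).prodShear fun l => Equiv.subLeft (2 * l)
  rw [thetaSeries_pow_mul_thetaSeries_pow hq0 hq 6 2 (by decide) (by decide), ← tsum_mul_left,
    residueSum, ← shear.tsum_eq]
  refine tsum_congr fun ⟨l, k⟩ => ?_
  rw [neg_mul, ← mul_left_comm, ← neg_mul, ← neg_one_mul, ← zpow_one_add₀ (by simp),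
    ← zpow_one_add₀ hq0]
  refine neg_one_zpow_mul_zpow_congr ⟨-2 * l - k, ?_⟩ ?_
  · change 2 * l - k + (-l * 5 + 1) - (1 + (l + k)) = _
    ring
  · change 2 * ((2 * l - k + (-l * 5 + 1)) ^ 2 + 3 * thetaExponent (2 * l - k)) = _
    push_cast
    linear_combination 3 * two_mul_thetaExponent (2 * l - k) - 30 * two_mul_thetaExponent l -
      5 * two_mul_thetaExponent k

lemma thetaSeries_mul_eq_sum_residueSum (hq0 : q ≠ 0) (hq : ‖q‖ < 1) :
    thetaSeries q (q ^ 2) * thetaSeries (-1) (q ^ 3) = ∑ d ∈ range 5, residueSum q d := by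
  have hsq := summable_norm_thetaTerm hq0 (pow_ne_zero 2 hq0)
    (norm_pow_lt_one_of_ne_zero hq two_ne_zero)
  have hcube := summable_norm_thetaTerm (neg_ne_zero.mpr one_ne_zero) (pow_ne_zero 3 hq0)
    (norm_pow_lt_one_of_ne_zero hq three_ne_zero)
  have hsum := summable_mul_of_summable_norm hsq hcube
  simp only [thetaTerm_mul_thetaTerm_eq_dissectedTerm hq0] at hsum
  let shear : ℤ × ℤ ≃ ℤ × ℤ := (Equiv.prodComm ℤ ℤ).trans
    (((Equiv.refl ℤ).prodShear Equiv.addLeft).trans (Equiv.prodComm ℤ ℤ))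
  rw [thetaSeries, thetaSeries, tsum_mul_tsum_of_summable_norm hsq hcube]
  simp only [thetaTerm_mul_thetaTerm_eq_dissectedTerm hq0]
  rw [← shear.tsum_eq]
  have hsplit := tsum_int_prod_eq_sum_residues 5 (shear.summable_iff.mpr hsum)
  simp only [Nat.cast_ofNat] at hsplit
  exact hsplit

theorem thetaSeries_dissection (htwo : (2 : 𝕜) ≠ 0) (hq0 : q ≠ 0) (hq : ‖q‖ < 1) :
    thetaSeries q (q ^ 2) * thetaSeries (-1) (q ^ 3) =
      2 * (thetaSeries (q ^ 12) (q ^ 30) * thetaSeries q (q ^ 5) -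
        q * (thetaSeries (q ^ 6) (q ^ 30) * thetaSeries (q ^ 2) (q ^ 5))) := by
  have hfour : residueSum q 4 = residueSum q 0 := residueSum_reflect q 0
  have hthree : residueSum q 3 = residueSum q 1 := residueSum_reflect q 1
  rw [thetaSeries_mul_eq_sum_residueSum hq0 hq]
  simp only [sum_range_succ, sum_range_zero, Nat.cast_ofNat, Nat.cast_zero, Nat.cast_one]
  rw [hfour, hthree, residueSum_two htwo q, residueSum_zero hq0 hq, residueSum_one hq0 hq]
  ring

end Dissection

section RogersRamanujan

variable {q : ℂ}

lemma RRG_eq_thetaSeries_div (hq0 : q ≠ 0) (hq : ‖q‖ < 1) :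
    RRG q = thetaSeries (q ^ 2) (q ^ 5) / qPochhammerInf q q := by
  have htheta := thetaSeries_pow_add hq0 hq (a := 2) (b := 3) (by decide)
  have hne {a : ℕ} (ha : a ≠ 0) := qPochhammerInf_pow_ne_zero hq ha (by decide : 5 ≠ 0)
  have h2 := hne two_ne_zero
  have h3 := hne three_ne_zero
  have h5 := hne (by decide : 5 ≠ 0)
  rw [RRG, tprod_one_sub_pow_eq_qPochhammerInf, tprod_one_sub_pow_eq_qPochhammerInf, pow_one,
    htheta, qPochhammerInf_self_eq_mul_five hq]
  field_simp

lemma RRH_eq_thetaSeries_div (hq0 : q ≠ 0) (hq : ‖q‖ < 1) :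
    RRH q = thetaSeries q (q ^ 5) / qPochhammerInf q q := by
  have htheta := thetaSeries_pow_add hq0 hq (a := 1) (b := 4) (by decide)
  have hne {a : ℕ} (ha : a ≠ 0) := qPochhammerInf_pow_ne_zero hq ha (by decide : 5 ≠ 0)
  have h1 := hne one_ne_zero
  have h4 := hne four_ne_zero
  have h5 := hne (by decide : 5 ≠ 0)
  simp only [pow_one, Nat.reduceAdd] at htheta h1
  rw [RRH, tprod_one_sub_pow_eq_qPochhammerInf, tprod_one_sub_pow_eq_qPochhammerInf, htheta,
    qPochhammerInf_self_eq_mul_five hq]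
  field_simp

lemma rchi_neg (q : ℂ) : rchi (-q) = qPochhammerInf q (q ^ 2) := by
  rw [rchi, qPochhammerInf]
  refine tprod_congr fun k => ?_
  rw [Odd.neg_pow ⟨k, rfl⟩]
  ring

end RogersRamanujan

/-- `G(q⁶)H(q) − q G(q)H(q⁶) = χ(−q)/χ(−q³)`. -/
theorem rr_forty_3_8 (q : ℂ) (hq : ‖q‖ < 1) :
    RRG (q ^ 6) * RRH q - q * RRG q * RRH (q ^ 6) =
      rchi (-q) / rchi (-q ^ 3) := by
  rcases eq_or_ne q 0 with rfl | hq0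
  · simp [RRG, RRH, rchi]
  have hq3 := norm_pow_lt_one_of_ne_zero hq three_ne_zero
  have hq6 := norm_pow_lt_one_of_ne_zero hq (by decide : 6 ≠ 0)
  have hP1 := qPochhammerInf_ne_zero hq hq
  have hP6 := qPochhammerInf_ne_zero hq6 hq6
  have hdissect := thetaSeries_dissection two_ne_zero hq0 hq
  rw [thetaSeries_self_sq hq0 hq, thetaSeries_neg_one (pow_ne_zero 3 hq0) hq3] at hdissect
  rw [RRG_eq_thetaSeries_div hq0 hq, RRH_eq_thetaSeries_div hq0 hq,
    RRG_eq_thetaSeries_div (pow_ne_zero 6 hq0) hq6, RRH_eq_thetaSeries_div (pow_ne_zero 6 hq0) hq6,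
    rchi_neg, rchi_neg]
  simp only [← pow_mul, Nat.reduceMul] at hdissect ⊢
  field_simp
  linear_combination (-1/2) * hdissect
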